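/- arXiv:1110.5110 — 2 statements merged into one kernel-verified Lean document; each statement's English description precedes it below -/
import Mathlib

section
/- Let L be the even lattice U² ⊕ D₆ (of signature (2,8)), and let l ∈ L be a vector with (l,l) = −4 and l/2 ∈ L^∨. Then the orthogonal complement L' = l^⊥ ∩ L is isometric to U² ⊕ D₅, every isometry of L' extends to an isometry of L, and any two such vectors l are equivalent under the orthogonal group O(L). -/
/-!
# The orthogonal complement of a (−4)-vector in `U² ⊕ D₆` (Ma, Lemma A.4)

Let `L` be the even lattice `U² ⊕ D₆` (of signature `(2,8)`), and let `l ∈ L`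
be a vector with `(l,l) = −4` and `l/2 ∈ L^∨`.  Then the orthogonal complement
`L' = l^⊥ ∩ L` is isometric to `U² ⊕ D₅`, every isometry of `L'` extends to an
isometry of `L`, and any two such vectors `l` are equivalent under the
orthogonal group `O(L)`.

Modelling conventions:

* Lattices are `ℤⁿ` with the bilinear form `⟪x, y⟫ = x ⬝ᵥ (G *ᵥ y)` for an
  explicit Gram matrix `G`; `U` is the hyperbolic plane and `D_n` the negative
  definite root lattice `{x ∈ ℤⁿ : Σxᵢ even}` with form `−Σxᵢ²`, presented by
  its root basis.
* `l/2 ∈ L^∨` means `⟪l, y⟫ ∈ 2ℤ` for all `y ∈ L`.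
* An isometry of `L'` extending to `L` means: a form-preserving `ℤ`-linear
  automorphism of `ℤ¹⁰` restricting to the given one on `L' = l^⊥`.
-/

noncomputable section

open Matrix

/-- The bilinear form of the lattice with Gram matrix `G`. -/
def inn {m : ℕ} (G : Matrix (Fin m) (Fin m) ℤ) (x y : Fin m → ℤ) : ℤ :=
  x ⬝ᵥ G.mulVec y

/-- The Gram matrix of `L = U ⊕ U ⊕ D₆` (signature `(2,8)`): coordinates
`0,1` and `2,3` are the two hyperbolic planes; coordinates `4,…,9` carry the
root basis of the negative definite `D₆`-lattice. -/
def LGram : Matrix (Fin 10) (Fin 10) ℤ :=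
  !![0, 1, 0, 0,  0,  0,  0,  0,  0,  0;
     1, 0, 0, 0,  0,  0,  0,  0,  0,  0;
     0, 0, 0, 1,  0,  0,  0,  0,  0,  0;
     0, 0, 1, 0,  0,  0,  0,  0,  0,  0;
     0, 0, 0, 0, -2,  0,  1,  0,  0,  0;
     0, 0, 0, 0,  0, -2,  1,  0,  0,  0;
     0, 0, 0, 0,  1,  1, -2,  1,  0,  0;
     0, 0, 0, 0,  0,  0,  1, -2,  1,  0;
     0, 0, 0, 0,  0,  0,  0,  1, -2,  1;
     0, 0, 0, 0,  0,  0,  0,  0,  1, -2]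

/-- The Gram matrix of `M = U ⊕ U ⊕ D₅`. -/
def MGram : Matrix (Fin 9) (Fin 9) ℤ :=
  !![0, 1, 0, 0,  0,  0,  0,  0,  0;
     1, 0, 0, 0,  0,  0,  0,  0,  0;
     0, 0, 0, 1,  0,  0,  0,  0,  0;
     0, 0, 1, 0,  0,  0,  0,  0,  0;
     0, 0, 0, 0, -2,  0,  1,  0,  0;
     0, 0, 0, 0,  0, -2,  1,  0,  0;
     0, 0, 0, 0,  1,  1, -2,  1,  0;
     0, 0, 0, 0,  0,  0,  1, -2,  1;
     0, 0, 0, 0,  0,  0,  0,  1, -2]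

/-- The orthogonal complement `L' = l^⊥ ∩ L` of a vector `l ∈ L`. -/
def perp (l : Fin 10 → ℤ) : Submodule ℤ (Fin 10 → ℤ) where
  carrier := {x | inn LGram l x = 0}
  add_mem' := by
    intro a b ha hb
    simp only [Set.mem_setOf_eq, inn] at *
    rw [Matrix.mulVec_add, dotProduct_add, ha, hb, add_zero]
  zero_mem' := by
    simp [inn]
  smul_mem' := by
    intro c x hx
    simp only [Set.mem_setOf_eq, inn] at *
    rw [Matrix.mulVec_smul, dotProduct_smul, hx, smul_zero]

/-!
Let `e` be a basis vector of one of the hyperbolic planes. The Eichler transvections at `e` show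
that two vectors `v`, `w` of the same norm with `(e, v) = (e, w) = p ≠ 0` and `v ≡ w` modulo `p` are
equivalent.

Minimising `|(z, v)| ≠ 0` over the orbit of `e`, which contains enough isotropic vectors for a
Euclidean division, one may assume, up to equivalence, that `p = (e, v)` divides the pairing of `v`
with the whole lattice. For `l` as in the theorem `p` is even, say `p = 2t`, and then `t` divides
`l` because `2 L^∨ ⊆ L`; as `(l, l) = -4`, this forces `p = ±2`. The conditions on `l` determine its
class modulo `2`, so all such vectors are equivalent to `stdVector = 2ε₁ ∈ D₆`, whose complement is
visibly `U² ⊕ D₅`.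

The lattice `L` is generated by `U² ⊕ D₅` and a vector whose projection is half of an element `s`,
where `s / 2` represents the only element of order two of `D₅^∨ / D₅ ≅ ℤ/4`. An isometry `g` of the
complement therefore satisfies `g s ≡ s` modulo `2`, and this is what is needed to extend it.
-/

open LinearMap (BilinForm)

section Orbits

variable {R M : Type*} [CommRing R] [AddCommGroup M] [Module R M] {B : BilinForm R M}

/-- Two vectors are equivalent under the orthogonal group `O(B)`. -/
def IsOrbitEquiv (B : BilinForm R M) (v w : M) : Prop :=
  ∃ g : B.IsometryEquiv B, g v = w

namespace IsOrbitEquiv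

variable {u v w : M}

theorem symm (h : IsOrbitEquiv B v w) : IsOrbitEquiv B w v := by
  obtain ⟨g, rfl⟩ := h
  exact ⟨g.symm, g.toLinearEquiv.symm_apply_apply v⟩

theorem trans (h : IsOrbitEquiv B u v) (h' : IsOrbitEquiv B v w) : IsOrbitEquiv B u w := by
  obtain ⟨g, rfl⟩ := h
  obtain ⟨g', rfl⟩ := h'
  exact ⟨g.trans g', rfl⟩

theorem neg_right (h : IsOrbitEquiv B v w) : IsOrbitEquiv B v (-w) := by
  obtain ⟨g, rfl⟩ := h
  exact ⟨g.trans { LinearEquiv.neg R with map_app' := fun x y => by simp }, rfl⟩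

theorem apply_self_eq (h : IsOrbitEquiv B v w) : B w w = B v v := by
  obtain ⟨g, rfl⟩ := h
  exact g.map_app v v

theorem dvd_apply {d : R} (h : IsOrbitEquiv B v w) (hv : ∀ x, d ∣ B v x) (x : M) :
    d ∣ B w x := by
  obtain ⟨g, rfl⟩ := h
  rw [← g.symm.map_app, show g.symm (g v) = v from g.toLinearEquiv.symm_apply_apply v]
  exact hv _

end IsOrbitEquiv

/-- The form of an even lattice. -/
structure IsEvenForm (B : BilinForm R M) : Prop where
  isSymm : B.IsSymm
  even_self : ∀ x, Even (B x x)

theorem isEvenForm_of_span_eq_top (hB : B.IsSymm) {s : Set M} (hs : Submodule.span R s = ⊤)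
    (heven : ∀ x ∈ s, Even (B x x)) : IsEvenForm B where
  isSymm := hB
  even_self x := by
    induction (hs ▸ Submodule.mem_top : x ∈ Submodule.span R s) using
      Submodule.span_induction with
    | mem x hx => exact heven x hx
    | zero => simp
    | add x y _ _ hx hy =>
      have hxy : B (x + y) (x + y) = B x x + B y y + 2 * B x y := by
        simp only [map_add, LinearMap.add_apply, hB.eq y x]
        ring
      rw [hxy]
      exact (hx.add hy).add (even_two_mul _)
    | smul c x _ hx => simpa using (hx.mul_left c).mul_left c

/-- The Eichler transvection `v ↦ v + (e,v) a - (a,v) e - ½(a,a)(e,v) e` attached to an isotropic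
vector `e` and a vector `a ⊥ e`, with `h` standing for `½(a,a)`. -/
def eichlerMap (B : BilinForm R M) (e a : M) (h : R) : M →ₗ[R] M :=
  LinearMap.id + (B e).smulRight a - (B a).smulRight e - (h • B e).smulRight e

theorem eichlerMap_apply (e a v : M) (h : R) :
    eichlerMap B e a h v = v + B e v • a - B a v • e - (h * B e v) • e :=
  rfl

section Transvection

variable {e a : M} {h : R}

theorem eichlerMap_neg_eichlerMap (hB : B.IsSymm) (he : B e e = 0) (hea : B e a = 0)
    (ha : B a a = 2 * h) (v : M) : eichlerMap B e (-a) h (eichlerMap B e a h v) = v := by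
  have hae : B a e = 0 := (hB.eq a e).trans hea
  simp only [eichlerMap_apply, map_add, map_sub, map_neg, map_smul, LinearMap.neg_apply, he,
    hea, hae, ha]
  module

theorem apply_eichlerMap_eichlerMap (hB : B.IsSymm) (he : B e e = 0) (hea : B e a = 0)
    (ha : B a a = 2 * h) (v w : M) :
    B (eichlerMap B e a h v) (eichlerMap B e a h w) = B v w := by
  have hae : B a e = 0 := (hB.eq a e).trans hea
  simp only [eichlerMap_apply, map_add, map_sub, map_smul, LinearMap.add_apply,
    LinearMap.sub_apply, LinearMap.smul_apply, smul_eq_mul, he, hea, hae, ha, hB.eq v e, hB.eq v a]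
  ring

/-- `eichlerMap` as an isometry. -/
def eichlerTransvection (hB : B.IsSymm) (he : B e e = 0) (hea : B e a = 0)
    (ha : B a a = 2 * h) : B.IsometryEquiv B where
  toLinearMap := eichlerMap B e a h
  invFun := eichlerMap B e (-a) h
  left_inv := eichlerMap_neg_eichlerMap hB he hea ha
  right_inv v := by
    simpa using eichlerMap_neg_eichlerMap hB he (a := -a) (by simpa) (by simpa) v
  map_app' := apply_eichlerMap_eichlerMap hB he hea ha

end Transvection

theorem isOrbitEquiv_of_eq_add_smul [NoZeroDivisors R] [NeZero (2 : R)]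
    (hB : IsEvenForm B) {e v w b : M} (he : B e e = 0) (hev : B e v ≠ 0) (hew : B e w = B e v)
    (hnorm : B w w = B v v) (hb : w = v + B e v • b) : IsOrbitEquiv B v w := by
  have heb : B e b = 0 := by
    rw [hb, map_add, map_smul, smul_eq_mul, add_eq_left] at hew
    exact (mul_eq_zero.1 hew).resolve_left hev
  obtain ⟨h, hh⟩ := (even_iff_exists_two_mul).1 (hB.even_self b)
  let g := eichlerTransvection hB.isSymm he heb hh
  have hg : g v = w - (B b v + h * B e v) • e := by
    change eichlerMap B e b h v = _
    rw [eichlerMap_apply, hb]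
    module
  -- `g v` and `w` have the same norm and differ by a multiple of `e`, which must be zero.
  have hcoeff : B b v + h * B e v = 0 := by
    have hgv := g.map_app v v
    simp only [hg, map_sub, map_smul, LinearMap.sub_apply, LinearMap.smul_apply, smul_eq_mul, he,
      hB.isSymm.eq w e, hew, hnorm] at hgv
    have : 2 * ((B b v + h * B e v) * B e v) = 0 := by linear_combination -hgv
    simpa [two_ne_zero, hev] using this
  exact ⟨g, by rw [hg, hcoeff, zero_smul, sub_zero]⟩

theorem isOrbitEquiv_of_isotropic [NoZeroDivisors R] [NeZero (2 : R)]
    (hB : IsEvenForm B) {x v w : M} (hx : B x x = 0) (hv : B v v = 0) (hw : B w w = 0)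
    (hxv : B x v = 1) (hxw : B x w = 1) : IsOrbitEquiv B v w :=
  have : Nontrivial R := ⟨2, 0, two_ne_zero⟩
  isOrbitEquiv_of_eq_add_smul hB (b := w - v) hx (by simp [hxv]) (hxw.trans hxv.symm)
    (hw.trans hv.symm) (by simp [hxv])

/-- `(e, f)` and `(e', f')` are standard bases of two orthogonal hyperbolic planes. -/
structure IsHyperbolicQuadruple (B : BilinForm R M) (e f e' f' : M) : Prop where
  ee : B e e = 0
  ff : B f f = 0
  ef : B e f = 1
  ee' : B e' e' = 0
  ff' : B f' f' = 0
  ef' : B e' f' = 1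
  e_e' : B e e' = 0
  e_f' : B e f' = 0
  f_e' : B f e' = 0
  f_f' : B f f' = 0

namespace IsHyperbolicQuadruple

variable {e f e' f' : M}

theorem swap_left (hB : B.IsSymm) (H : IsHyperbolicQuadruple B e f e' f') :
    IsHyperbolicQuadruple B f e e' f' :=
  ⟨H.ff, H.ee, (hB.eq f e).trans H.ef, H.ee', H.ff', H.ef', H.f_e', H.f_f', H.e_e', H.e_f'⟩

theorem swap_right (hB : B.IsSymm) (H : IsHyperbolicQuadruple B e f e' f') :
    IsHyperbolicQuadruple B e f f' e' :=
  ⟨H.ee, H.ff, H.ef, H.ff', H.ee', (hB.eq f' e').trans H.ef', H.e_f', H.e_e', H.f_f', H.f_e'⟩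

theorem exists_eq_add (hB : B.IsSymm) (H : IsHyperbolicQuadruple B e f e' f') (a : M) :
    ∃ k, B e k = 0 ∧ B f k = 0 ∧ B e' k = 0 ∧ B f' k = 0 ∧
      a = B f a • e + B e a • f + B f' a • e' + B e' a • f' + k := by
  refine ⟨a - (B f a • e + B e a • f + B f' a • e' + B e' a • f'), ?_, ?_, ?_, ?_, by abel⟩ <;>
    simp [H.ee, H.ff, H.ef, H.ee', H.ff', H.ef', H.e_e', H.e_f', H.f_e', H.f_f',
      hB.eq f e, hB.eq f' e', hB.eq e' e, hB.eq f' e, hB.eq e' f, hB.eq f' f]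

theorem dvd_apply_of_forall (hB : B.IsSymm) (H : IsHyperbolicQuadruple B e f e' f') {v : M} {d : R}
    (he : d ∣ B e v) (he' : d ∣ B e' v) (hf' : d ∣ B f' v)
    (hf : ∀ k, B e k = 0 → B f k = 0 → B e' k = 0 → B f' k = 0 → d ∣ B (f + k) v) (a : M) :
    d ∣ B a v := by
  have hf₀ : d ∣ B f v := by simpa using hf 0 (by simp) (by simp) (by simp) (by simp)
  obtain ⟨k, hek, hfk, hek', hfk', hk⟩ := H.exists_eq_add hB a
  have hkv : d ∣ B k v := (dvd_add_right hf₀).1 (by simpa using hf k hek hfk hek' hfk')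
  rw [hk]
  simp only [map_add, map_smul, LinearMap.add_apply, LinearMap.smul_apply, smul_eq_mul]
  exact ((((he.mul_left _).add (hf₀.mul_left _)).add (he'.mul_left _)).add (hf'.mul_left _)).add hkv

section Isotropic

variable [NoZeroDivisors R] [NeZero (2 : R)] (hB : IsEvenForm B)
  (H : IsHyperbolicQuadruple B e f e' f')

include hB H

theorem isOrbitEquiv : IsOrbitEquiv B e e' := by
  refine isOrbitEquiv_of_isotropic hB (x := f + f') ?_ H.ee H.ee' ?_ ?_ <;>
    simp [H.ff, H.ff', H.ef, H.ef', H.f_f', H.f_e', H.e_f', hB.isSymm.eq f' f, hB.isSymm.eq f e,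
      hB.isSymm.eq f' e', hB.isSymm.eq f' e]

theorem isOrbitEquiv_add_smul (c : R) : IsOrbitEquiv B e (e' + c • e) := by
  refine (H.isOrbitEquiv hB).trans <|
    isOrbitEquiv_of_isotropic hB (x := f') H.ff' H.ee' ?_ ?_ ?_ <;>
    simp [H.ee, H.ee', H.e_e', H.ef', H.e_f', hB.isSymm.eq e' e, hB.isSymm.eq f' e',
      hB.isSymm.eq f' e]

theorem isOrbitEquiv_of_apply_eq_one {z : M} (hz : B z z = 0) (hez : B e z = 1) :
    IsOrbitEquiv B e z :=
  (H.isOrbitEquiv hB).trans <|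
    ((H.swap_left hB.isSymm).isOrbitEquiv hB).symm.trans <|
      isOrbitEquiv_of_isotropic hB H.ee H.ff hz H.ef hez

theorem isOrbitEquiv_add_sub_smul {a : M} {h : R} (hea : B e a = 0) (hfa : B f a = 0)
    (ha : B a a = 2 * h) : IsOrbitEquiv B e (f + a - h • e) := by
  apply H.isOrbitEquiv_of_apply_eq_one hB <;>
    simp [H.ee, H.ff, H.ef, hea, hfa, ha, hB.isSymm.eq f e, hB.isSymm.eq a e, hB.isSymm.eq a f]
  ring

end Isotropic

end IsHyperbolicQuadruple

end Orbits

section IntegralForms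

variable {M : Type*} [AddCommGroup M] {B : BilinForm ℤ M} {e f e' f' v : M}

theorem dvd_of_natAbs_le_natAbs_emod {a b : ℤ} (hb : b ≠ 0)
    (h : a % b ≠ 0 → b.natAbs ≤ (a % b).natAbs) : b ∣ a := by
  refine Int.dvd_of_emod_eq_zero (by_contra fun hab => ?_)
  have hle := h hab
  have hnonneg := Int.emod_nonneg a hb
  have hlt := Int.abs_eq_natAbs b ▸ Int.emod_lt_abs a hb
  omega

namespace IsHyperbolicQuadruple

variable (hB : IsEvenForm B) (H : IsHyperbolicQuadruple B e f e' f')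

include hB H

theorem exists_isOrbitEquiv_apply_ne_zero (hv : ∃ a, B a v ≠ 0) :
    ∃ z, IsOrbitEquiv B e z ∧ B z v ≠ 0 := by
  by_contra! hzero
  obtain ⟨a, ha⟩ := hv
  refine ha (zero_dvd_iff.1 (H.dvd_apply_of_forall hB.isSymm ?_ ?_ ?_ ?_ a))
  all_goals simp only [zero_dvd_iff]
  · exact hzero e ⟨.refl B, rfl⟩
  · exact hzero e' (H.isOrbitEquiv hB)
  · exact hzero f' ((H.swap_right hB.isSymm).isOrbitEquiv hB)
  · intro k hek hfk _ _
    obtain ⟨h, hh⟩ := even_iff_exists_two_mul.1 (hB.even_self k)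
    have := hzero _ (H.isOrbitEquiv_add_sub_smul hB hek hfk hh)
    simpa [hzero e ⟨.refl B, rfl⟩] using this

section Minimal

variable (hev : B e v ≠ 0)
  (hmin : ∀ z, IsOrbitEquiv B e z → B z v ≠ 0 → (B e v).natAbs ≤ (B z v).natAbs)

include hev hmin

theorem dvd_apply_left_of_minimal : B e v ∣ B e' v := by
  refine dvd_of_natAbs_le_natAbs_emod hev fun hne => ?_
  have hz : B (e' + (-(B e' v / B e v)) • e) v = B e' v % B e v := by
    simp only [map_add, map_smul, LinearMap.add_apply, LinearMap.smul_apply, smul_eq_mul,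
      Int.emod_def]
    ring
  rw [← hz] at hne ⊢
  exact hmin _ (H.isOrbitEquiv_add_smul hB _) hne

theorem dvd_apply_of_minimal (a : M) : B e v ∣ B a v := by
  have he' := H.dvd_apply_left_of_minimal hB hev hmin
  have hf' := (H.swap_right hB.isSymm).dvd_apply_left_of_minimal hB hev hmin
  refine H.dvd_apply_of_forall hB.isSymm dvd_rfl he' hf' (fun k hek hfk hek' hfk' => ?_) a
  obtain ⟨b, hb⟩ := he'
  obtain ⟨c, hc⟩ := hf'
  obtain ⟨h, hh⟩ := even_iff_exists_two_mul.1 (hB.even_self k)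
  refine dvd_of_natAbs_le_natAbs_emod hev fun hne => ?_
  -- With `x = c + 1` the value at `v` of the isotropic vector `z` below is
  -- `B (f + k) v + B e v * (x * b + y * c - x * y - h) = B (f + k) v + B e v * (x * b - y - h)`,
  -- so `y` can be chosen to reduce it modulo `B e v`.
  let x := c + 1
  let y := x * b - h + B (f + k) v / B e v
  have hz : IsOrbitEquiv B e (f + (k + x • e' + y • f') - (h + x * y) • e) := by
    apply H.isOrbitEquiv_add_sub_smul hB
    · simp [hek, H.e_e', H.e_f']
    · simp [hfk, H.f_e', H.f_f']
    · simp [hh, hek', hfk', H.ee', H.ff', H.ef', hB.isSymm.eq f' e', hB.isSymm.eq k e',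
        hB.isSymm.eq k f']
      ring
  have hzv : B (f + (k + x • e' + y • f') - (h + x * y) • e) v = B (f + k) v % B e v := by
    simp only [map_add, map_sub, map_smul, LinearMap.add_apply, LinearMap.sub_apply,
      LinearMap.smul_apply, smul_eq_mul, Int.emod_def, hb, hc, x, y]
    ring
  rw [← hzv] at hne ⊢
  exact hmin _ hz hne

end Minimal

theorem exists_isOrbitEquiv_dvd_apply (hv : ∃ a, B a v ≠ 0) :
    ∃ w, IsOrbitEquiv B v w ∧ B e w ≠ 0 ∧ ∀ a, B e w ∣ B a w := by
  obtain ⟨_, ⟨⟨g, rfl⟩, hne⟩, hmin⟩ := exists_minimalFor_of_wellFoundedLT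
    (fun z => IsOrbitEquiv B e z ∧ B z v ≠ 0) (fun z => (B z v).natAbs)
    (H.exists_isOrbitEquiv_apply_ne_zero hB hv)
  have hg (z : M) : B z (g.symm v) = B (g z) v := by
    rw [← g.map_app, show g (g.symm v) = v from g.toLinearEquiv.apply_symm_apply v]
  refine ⟨g.symm v, ⟨g.symm, rfl⟩, by rwa [hg], H.dvd_apply_of_minimal hB (by rwa [hg]) ?_⟩
  intro z hez hz
  rw [hg] at hz
  rw [hg, hg]
  have hge : IsOrbitEquiv B e (g z) := hez.trans ⟨g, rfl⟩
  exact le_of_not_gt fun hlt => hlt.not_ge (hmin ⟨hge, hz⟩ hlt.le)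

end IsHyperbolicQuadruple

/-- A vector `l` with `(l,l) = -4` and `l/2` in the dual lattice; these are the `(-4)`-vectors
whose reflection is integral. -/
structure IsReflectiveMinusFourVector (B : BilinForm ℤ M) (l : M) : Prop where
  apply_self : B l l = -4
  two_dvd_apply : ∀ y, 2 ∣ B l y

namespace IsReflectiveMinusFourVector

variable {l l' : M}

theorem of_isOrbitEquiv (hl : IsReflectiveMinusFourVector B l) (h : IsOrbitEquiv B l l') :
    IsReflectiveMinusFourVector B l' :=
  ⟨h.apply_self_eq.trans hl.apply_self, h.dvd_apply hl.two_dvd_apply⟩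

theorem isUnit_of_eq_smul (hB : IsEvenForm B) (hl : IsReflectiveMinusFourVector B l) {t : ℤ}
    {u : M} (hu : l = t • u) : IsUnit t := by
  obtain ⟨k, hk⟩ := even_iff_exists_two_mul.1 (hB.even_self u)
  have hnorm : t * (t * (2 * k)) = -4 := by simpa [hu, hk] using hl.apply_self
  exact Int.prime_two.squarefree t ⟨-k, by linarith⟩

end IsReflectiveMinusFourVector

end IntegralForms

section Gluing

variable {R M N : Type*} [CommRing R] [AddCommGroup M] [Module R M] [AddCommGroup N] [Module R N]
  {B : BilinForm R M} {Q : BilinForm R N} {P : Submodule R M} (φ : (R × N) ≃ₗ[R] M)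

/-- The extension sends the glue vector `t = φ (1, 0)` to `t + y`: as `2 t` pairs with `N` in the
same way as `s` does, `g s = s + 2 y` is what preserves the pairing of `t` with `N`. -/
theorem exists_isometryEquiv_extension [NoZeroDivisors R] [NeZero (2 : R)]
    (hB : B.IsSymm) (hφ : ∀ x y, B (φ (0, x)) (φ (0, y)) = Q x y) {s y : N}
    (hs : ∀ x, 2 * B (φ (1, 0)) (φ (0, x)) = Q s x) (g : Q.IsometryEquiv Q)
    (hg : g s = s + (2 : R) • y) :
    ∃ F : B.IsometryEquiv B, ∀ x, F (φ (0, x)) = φ (0, g x) := by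
  have hφ_eq (c : R) (x : N) : φ (c, x) = c • φ (1, 0) + φ (0, x) := by
    rw [← map_smul, ← map_add]
    simp
  have hQ (x z : N) : Q x z = Q z x := by rw [← hφ, ← hφ, hB.eq]
  have hy (x : N) : B (φ (1, y)) (φ (0, g x)) = B (φ (1, 0)) (φ (0, x)) := by
    refine mul_left_cancel₀ two_ne_zero ?_
    rw [hφ_eq 1 y, one_smul, map_add, LinearMap.add_apply, mul_add, hs, hs, hφ, ← g.map_app x s,
      hg, map_add, map_smul, LinearMap.add_apply, LinearMap.smul_apply, smul_eq_mul]
  have hyy : B (φ (1, y)) (φ (1, y)) = B (φ (1, 0)) (φ (1, 0)) := by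
    refine mul_left_cancel₀ two_ne_zero (mul_left_cancel₀ two_ne_zero ?_)
    have hgs := g.map_app s s
    simp only [hg, map_add, map_smul, LinearMap.add_apply, LinearMap.smul_apply, smul_eq_mul,
      hQ y s] at hgs
    simp only [hφ_eq 1 y, one_smul, map_add, LinearMap.add_apply, hφ, hB.eq (φ (0, y))]
    linear_combination 4 * hs y + hgs
  let F := φ.symm.trans (((LinearEquiv.refl R R).skewProd g.toLinearEquiv
    (LinearMap.toSpanSingleton R N y)).trans φ)
  have hF (c : R) (x : N) : F (φ (c, x)) = c • φ (1, y) + φ (0, g x) := by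
    rw [← map_smul, ← map_add]
    simp [F, add_comm]
  refine ⟨⟨F, ?_⟩, fun x => (hF 0 x).trans (by simp)⟩
  refine φ.surjective.forall₂.2 fun ⟨c, x⟩ ⟨d, z⟩ => ?_
  change B (F (φ (c, x))) (F (φ (d, z))) = B (φ (c, x)) (φ (d, z))
  rw [hF, hF, hφ_eq c x, hφ_eq d z]
  simp only [map_add, map_smul, LinearMap.add_apply, LinearMap.smul_apply, smul_eq_mul, hφ,
    g.map_app, hyy, hy, hB.eq (φ (0, _)) (φ (1, _))]

theorem exists_isometryEquiv_restrict (hφ : ∀ x y, B (φ (0, x)) (φ (0, y)) = Q x y)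
    (hP : ∀ c x, φ (c, x) ∈ P ↔ c = 0) :
    ∃ e : Q.IsometryEquiv (B.restrict P), ∀ x, (e x : M) = φ (0, x) := by
  let j : N →ₗ[R] M := φ.toLinearMap ∘ₗ LinearMap.inr R R N
  have hj : Function.Injective j := φ.injective.comp LinearMap.inr_injective
  have hrange : LinearMap.range j = P := by
    ext x
    obtain ⟨⟨c, x⟩, rfl⟩ := φ.surjective x
    simp [j, hP, eq_comm]
  let e := (LinearEquiv.ofInjective j hj).trans (LinearEquiv.ofEq _ P hrange)
  exact ⟨⟨e, hφ⟩, fun x => rfl⟩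

end Gluing

section Matrices

variable {n R : Type*} [Fintype n] [DecidableEq n] [CommRing R]

theorem isEvenForm_toBilin' {G : Matrix n n R} (hG : G.IsSymm) (hdiag : ∀ i, Even (G i i)) :
    IsEvenForm G.toBilin' := by
  refine isEvenForm_of_span_eq_top (isSymm_toBilin'_iff_isSymm.2 hG) (Pi.basisFun R n).span_eq ?_
  rintro _ ⟨i, rfl⟩
  simpa using hdiag i

theorem exists_eq_smul_of_dvd_toBilin' [IsDomain R] {G H : Matrix n n R} {m t : R} (hm : m ≠ 0)
    (hHG : H * G = m • 1) {w : n → R} (hw : ∀ a, m * t ∣ G.toBilin' a w) : ∃ u, w = t • u := by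
  choose y hy using fun i => hw (Pi.single i 1)
  have hGw : G *ᵥ w = (m * t) • y := by
    ext i
    simpa [toBilin'_apply'] using hy i
  refine ⟨H *ᵥ y, smul_right_injective _ hm ?_⟩
  change m • w = m • t • H *ᵥ y
  rw [smul_smul, ← mulVec_smul, ← hGw, mulVec_mulVec, hHG, smul_mulVec, one_mulVec]

end Matrices

/-- `Fin.snocEquiv` as a linear equivalence. -/
def snocLinearEquiv (R : Type*) [Semiring R] (n : ℕ) : (R × (Fin n → R)) ≃ₗ[R] (Fin (n + 1) → R) :=
  (Fin.snocEquiv fun _ => R).toLinearEquiv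
    { map_add := fun p q => by
        ext i
        refine Fin.lastCases ?_ (fun i => ?_) i <;> simp [Fin.snocEquiv]
      map_smul := fun c p => by
        ext i
        refine Fin.lastCases ?_ (fun i => ?_) i <;> simp [Fin.snocEquiv] }

/-- The form of `L = U² ⊕ D₆`. -/
abbrev formL : BilinForm ℤ (Fin 10 → ℤ) := LGram.toBilin'

/-- The form of `U² ⊕ D₅`. -/
abbrev formM : BilinForm ℤ (Fin 9 → ℤ) := MGram.toBilin'

theorem inn_eq_toBilin' {m : ℕ} (G : Matrix (Fin m) (Fin m) ℤ) (x y : Fin m → ℤ) :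
    inn G x y = G.toBilin' x y :=
  (toBilin'_apply' G x y).symm

theorem formL_apply (x y : Fin 10 → ℤ) : formL x y =
    x 0 * y 1 + x 1 * y 0 + x 2 * y 3 + x 3 * y 2
    + x 4 * (-2 * y 4 + y 6) + x 5 * (-2 * y 5 + y 6)
    + x 6 * (y 4 + y 5 - 2 * y 6 + y 7) + x 7 * (y 6 - 2 * y 7 + y 8)
    + x 8 * (y 7 - 2 * y 8 + y 9) + x 9 * (y 8 - 2 * y 9) := by
  simp [toBilin'_apply', LGram, dotProduct, mulVec, Fin.sum_univ_succ]
  ring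

theorem formM_apply (x y : Fin 9 → ℤ) : formM x y =
    x 0 * y 1 + x 1 * y 0 + x 2 * y 3 + x 3 * y 2
    + x 4 * (-2 * y 4 + y 6) + x 5 * (-2 * y 5 + y 6)
    + x 6 * (y 4 + y 5 - 2 * y 6 + y 7) + x 7 * (y 6 - 2 * y 7 + y 8)
    + x 8 * (y 7 - 2 * y 8) := by
  simp [toBilin'_apply', MGram, dotProduct, mulVec, Fin.sum_univ_succ]
  ring

theorem isEvenForm_formL : IsEvenForm formL :=
  isEvenForm_toBilin' (by decide) (by decide)

theorem isHyperbolicQuadruple_formL :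
    IsHyperbolicQuadruple formL (Pi.single 0 1) (Pi.single 1 1) (Pi.single 2 1)
      (Pi.single 3 1) := by
  constructor <;> rw [toBilin'_single] <;> rfl

/-- Twice the inverse of `LGram`; it is integral because `D₆^∨ / D₆` is killed by `2`. -/
def twiceInvLGram : Matrix (Fin 10) (Fin 10) ℤ :=
  !![0, 2, 0, 0,  0,  0,  0,  0,  0,  0;
     2, 0, 0, 0,  0,  0,  0,  0,  0,  0;
     0, 0, 0, 2,  0,  0,  0,  0,  0,  0;
     0, 0, 2, 0,  0,  0,  0,  0,  0,  0;
     0, 0, 0, 0, -3, -2, -4, -3, -2, -1;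
     0, 0, 0, 0, -2, -3, -4, -3, -2, -1;
     0, 0, 0, 0, -4, -4, -8, -6, -4, -2;
     0, 0, 0, 0, -3, -3, -6, -6, -4, -2;
     0, 0, 0, 0, -2, -2, -4, -4, -4, -2;
     0, 0, 0, 0, -1, -1, -2, -2, -2, -2]

theorem twiceInvLGram_mul_LGram : twiceInvLGram * LGram = (2 : ℤ) • 1 := by
  decide

/-- The vector `2ε₁` of `D₆`, in the root basis. -/
def stdVector : Fin 10 → ℤ := ![0, 0, 0, 0, 1, 1, 2, 2, 2, 2]

theorem formL_stdVector (y : Fin 10 → ℤ) : formL stdVector y = -2 * y 9 := by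
  simp [formL_apply, stdVector]
  ring

theorem isReflectiveMinusFourVector_stdVector : IsReflectiveMinusFourVector formL stdVector where
  apply_self := formL_stdVector _
  two_dvd_apply y := by simp [formL_stdVector]

theorem two_dvd_of_two_dvd_formL {x : Fin 10 → ℤ} (hx : ∀ y, 2 ∣ formL x y) :
    2 ∣ x 0 ∧ 2 ∣ x 1 ∧ 2 ∣ x 2 ∧ 2 ∣ x 3 ∧ 2 ∣ x 6 ∧ 2 ∣ x 8 ∧ 2 ∣ x 4 + x 5 + x 7 ∧
      2 ∣ x 7 + x 9 := by
  have h0 : 2 ∣ x 0 := by simpa [formL_apply] using hx (Pi.single 1 1)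
  have h1 : 2 ∣ x 1 := by simpa [formL_apply] using hx (Pi.single 0 1)
  have h2 : 2 ∣ x 2 := by simpa [formL_apply] using hx (Pi.single 3 1)
  have h3 : 2 ∣ x 3 := by simpa [formL_apply] using hx (Pi.single 2 1)
  have h4 : 2 ∣ -(x 4 * 2) + x 6 := by simpa [formL_apply] using hx (Pi.single 4 1)
  have h6 : 2 ∣ x 4 + x 5 + -(x 6 * 2) + x 7 := by simpa [formL_apply] using hx (Pi.single 6 1)
  have h8 : 2 ∣ x 7 + -(x 8 * 2) + x 9 := by simpa [formL_apply] using hx (Pi.single 8 1)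
  have h9 : 2 ∣ x 8 + -(x 9 * 2) := by simpa [formL_apply] using hx (Pi.single 9 1)
  omega

section

variable {l : Fin 10 → ℤ} (hl : IsReflectiveMinusFourVector formL l)

include hl

theorem exists_isOrbitEquiv_apply_eq_two :
    ∃ w, IsOrbitEquiv formL l w ∧ formL (Pi.single 0 1) w = 2 := by
  have hll : formL l l ≠ 0 := by simp [hl.apply_self]
  obtain ⟨w, hlw, -, hdvd⟩ :=
    isHyperbolicQuadruple_formL.exists_isOrbitEquiv_dvd_apply isEvenForm_formL ⟨l, hll⟩
  have hw := hl.of_isOrbitEquiv hlw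
  obtain ⟨t, ht⟩ : 2 ∣ formL (Pi.single 0 1) w := by
    rw [isEvenForm_formL.isSymm.eq]
    exact hw.two_dvd_apply _
  obtain ⟨u, hu⟩ := exists_eq_smul_of_dvd_toBilin' two_ne_zero twiceInvLGram_mul_LGram (ht ▸ hdvd)
  rcases Int.isUnit_iff.1 (hw.isUnit_of_eq_smul isEvenForm_formL hu) with rfl | rfl
  · exact ⟨w, hlw, ht⟩
  · exact ⟨-w, hlw.neg_right, by simp [ht]⟩

theorem exists_eq_stdVector_add : ∃ y, l = stdVector + (2 : ℤ) • y := by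
  obtain ⟨⟨a, h0⟩, ⟨b, h1⟩, ⟨c, h2⟩, ⟨d, h3⟩, ⟨p, h6⟩, ⟨q, h8⟩, ⟨r, h457⟩, ⟨s, h79⟩⟩ :=
    two_dvd_of_two_dvd_formL hl.two_dvd_apply
  have h5 : l 5 = 2 * r - l 4 - l 7 := by linarith
  have h9 : l 9 = 2 * s - l 7 := by linarith
  have hnorm := hl.apply_self
  rw [formL_apply, h0, h1, h2, h3, h5, h6, h8, h9] at hnorm
  let k := a * b + c * d - p ^ 2 - q ^ 2 + p * r + q * s - r * (r - l 4 - l 7) - s * (s - l 7)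
  have h7 : 2 ∣ l 7 := by
    have hsq : l 7 ^ 2 = 2 * (1 + 2 * k - l 4 ^ 2 - l 7 ^ 2 - l 4 * l 7) := by
      simp only [k]
      linarith
    exact Int.prime_two.dvd_of_dvd_pow ⟨_, hsq⟩
  obtain ⟨t, h7⟩ := h7
  have h4 : Odd (l 4) := by
    have hsq : l 4 ^ 2 = 2 * (k - 3 * t ^ 2 - t * l 4) + 1 := by
      simp only [k, h7] at hnorm ⊢
      linarith
    exact (Int.odd_pow' two_ne_zero).1 ⟨_, hsq⟩
  obtain ⟨m, h4⟩ := h4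
  refine ⟨![a, b, c, d, m, r - m - t - 1, p - 1, t - 1, q - 1, s - t - 1], ?_⟩
  ext i
  fin_cases i <;> simp [stdVector] <;> linarith

theorem isOrbitEquiv_of_isReflectiveMinusFourVector {l' : Fin 10 → ℤ}
    (hl' : IsReflectiveMinusFourVector formL l') : IsOrbitEquiv formL l l' := by
  obtain ⟨w, hlw, hw⟩ := exists_isOrbitEquiv_apply_eq_two hl
  obtain ⟨w', hlw', hw'⟩ := exists_isOrbitEquiv_apply_eq_two hl'
  obtain ⟨y, hy⟩ := exists_eq_stdVector_add (hl.of_isOrbitEquiv hlw)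
  obtain ⟨y', hy'⟩ := exists_eq_stdVector_add (hl'.of_isOrbitEquiv hlw')
  refine hlw.trans (IsOrbitEquiv.trans ?_ hlw'.symm)
  refine isOrbitEquiv_of_eq_add_smul isEvenForm_formL (b := y' - y)
    isHyperbolicQuadruple_formL.ee (by simp [hw]) (hw'.trans hw.symm) ?_ ?_
  · rw [hlw.apply_self_eq, hlw'.apply_self_eq, hl.apply_self, hl'.apply_self]
  · rw [hw, hy, hy']
    module

end

/-- `-2ε₂` in `D₅ = ⟨ε₂, …, ε₆⟩ ∩ D₆`: half of it generates the `2`-torsion of `D₅^∨ / D₅`, and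
`stdVector + glueVector` is twice the last basis vector of `L`. -/
def glueVector : Fin 9 → ℤ := ![0, 0, 0, 0, -1, -1, -2, -2, -2]

theorem formM_glueVector (x : Fin 9 → ℤ) : formM glueVector x = 2 * x 8 := by
  simp [formM_apply, glueVector]
  ring

theorem two_dvd_of_two_dvd_formM {x : Fin 9 → ℤ} (hx : ∀ y, 2 ∣ formM x y) :
    2 ∣ x 0 ∧ 2 ∣ x 1 ∧ 2 ∣ x 2 ∧ 2 ∣ x 3 ∧ 2 ∣ x 4 + x 5 ∧ 2 ∣ x 6 ∧ 2 ∣ x 7 ∧ 2 ∣ x 8 := by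
  have h0 : 2 ∣ x 0 := by simpa [formM_apply] using hx (Pi.single 1 1)
  have h1 : 2 ∣ x 1 := by simpa [formM_apply] using hx (Pi.single 0 1)
  have h2 : 2 ∣ x 2 := by simpa [formM_apply] using hx (Pi.single 3 1)
  have h3 : 2 ∣ x 3 := by simpa [formM_apply] using hx (Pi.single 2 1)
  have h4 : 2 ∣ -(x 4 * 2) + x 6 := by simpa [formM_apply] using hx (Pi.single 4 1)
  have h6 : 2 ∣ x 4 + x 5 + -(x 6 * 2) + x 7 := by simpa [formM_apply] using hx (Pi.single 6 1)
  have h7 : 2 ∣ x 6 + -(x 7 * 2) + x 8 := by simpa [formM_apply] using hx (Pi.single 7 1)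
  have h8 : 2 ∣ x 7 + -(x 8 * 2) := by simpa [formM_apply] using hx (Pi.single 8 1)
  omega

theorem eq_smul_or_eq_glueVector_add {x : Fin 9 → ℤ} (hx : ∀ y, 2 ∣ formM x y) :
    (∃ u, x = (2 : ℤ) • u) ∨ ∃ u, x = glueVector + (2 : ℤ) • u := by
  obtain ⟨⟨a, h0⟩, ⟨b, h1⟩, ⟨c, h2⟩, ⟨d, h3⟩, ⟨r, h45⟩, ⟨p, h6⟩, ⟨t, h7⟩, ⟨q, h8⟩⟩ :=
    two_dvd_of_two_dvd_formM hx
  rcases Int.even_or_odd' (x 4) with ⟨m, h4 | h4⟩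
  · left
    refine ⟨![a, b, c, d, m, r - m, p, t, q], ?_⟩
    ext i
    fin_cases i <;> simp <;> linarith
  · right
    refine ⟨![a, b, c, d, m + 1, r - m, p + 1, t + 1, q + 1], ?_⟩
    ext i
    fin_cases i <;> simp [glueVector] <;> linarith

theorem exists_apply_glueVector_eq_add (g : formM.IsometryEquiv formM) :
    ∃ y, g glueVector = glueVector + (2 : ℤ) • y := by
  have hdvd : ∀ y, 2 ∣ formM (g glueVector) y :=
    IsOrbitEquiv.dvd_apply ⟨g, rfl⟩ fun x => ⟨x 8, formM_glueVector x⟩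
  refine (eq_smul_or_eq_glueVector_add hdvd).resolve_left ?_
  rintro ⟨u, hu⟩
  have hs : glueVector = (2 : ℤ) • g.symm u := by
    rw [← map_smul, ← hu]
    exact (g.toLinearEquiv.symm_apply_apply glueVector).symm
  have h4 : -1 = 2 * g.symm u 4 := congrFun hs 4
  omega

theorem snocLinearEquiv_apply (c : ℤ) (x : Fin 9 → ℤ) :
    snocLinearEquiv ℤ 9 (c, x) = ![x 0, x 1, x 2, x 3, x 4, x 5, x 6, x 7, x 8, c] := by
  ext i
  fin_cases i <;> rfl

theorem formL_snocLinearEquiv (c d : ℤ) (x y : Fin 9 → ℤ) :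
    formL (snocLinearEquiv ℤ 9 (c, x)) (snocLinearEquiv ℤ 9 (d, y)) =
      formM x y + c * y 8 + d * x 8 - 2 * (c * d) := by
  simp [formL_apply, formM_apply, snocLinearEquiv_apply]
  ring

theorem exists_adapted_coordinates {l : Fin 10 → ℤ} (hl : IsReflectiveMinusFourVector formL l) :
    ∃ φ : (ℤ × (Fin 9 → ℤ)) ≃ₗ[ℤ] (Fin 10 → ℤ),
      (∀ x y, formL (φ (0, x)) (φ (0, y)) = formM x y) ∧
      (∀ x, 2 * formL (φ (1, 0)) (φ (0, x)) = formM glueVector x) ∧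
      ∀ c x, φ (c, x) ∈ perp l ↔ c = 0 := by
  obtain ⟨g, rfl⟩ :=
    isOrbitEquiv_of_isReflectiveMinusFourVector isReflectiveMinusFourVector_stdVector hl
  refine ⟨(snocLinearEquiv ℤ 9).trans g.toLinearEquiv, fun x y => ?_, fun x => ?_, fun c x => ?_⟩
  · simp [formL_snocLinearEquiv]
  · simp [formL_snocLinearEquiv, formM_glueVector]
  · change inn LGram (g stdVector) (g (snocLinearEquiv ℤ 9 (c, x))) = 0 ↔ c = 0
    rw [inn_eq_toBilin', g.map_app, formL_stdVector]
    simp [snocLinearEquiv_apply]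

theorem nonempty_isometryEquiv_perp {l : Fin 10 → ℤ} (hl : IsReflectiveMinusFourVector formL l) :
    Nonempty ((formL.restrict (perp l)).IsometryEquiv formM) := by
  obtain ⟨φ, hφ, -, hP⟩ := exists_adapted_coordinates hl
  obtain ⟨e, -⟩ := exists_isometryEquiv_restrict φ hφ hP
  exact ⟨e.symm⟩

theorem exists_isometryEquiv_extending {l : Fin 10 → ℤ} (hl : IsReflectiveMinusFourVector formL l)
    (f : (formL.restrict (perp l)).IsometryEquiv (formL.restrict (perp l))) :
    ∃ F : formL.IsometryEquiv formL, ∀ x : perp l, F x = f x := by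
  obtain ⟨φ, hφ, hs, hP⟩ := exists_adapted_coordinates hl
  obtain ⟨e, he⟩ := exists_isometryEquiv_restrict φ hφ hP
  let g : formM.IsometryEquiv formM := (e.trans f).trans e.symm
  obtain ⟨y, hy⟩ := exists_apply_glueVector_eq_add g
  obtain ⟨F, hF⟩ := exists_isometryEquiv_extension φ isEvenForm_formL.isSymm hφ hs g hy
  refine ⟨F, e.toLinearEquiv.surjective.forall.2 fun x => ?_⟩
  have heg : e (g x) = f (e x) := e.toLinearEquiv.apply_symm_apply (f (e x))
  change F (e x) = f (e x)
  rw [← heg, he, he, hF]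

/-- **Ma, Lemma A.4.**  For `l ∈ L = U² ⊕ D₆` with `(l,l) = −4` and
`l/2 ∈ L^∨`: the orthogonal complement `l^⊥ ∩ L` is isometric to `U² ⊕ D₅`;
every isometry of `l^⊥ ∩ L` extends to an isometry of `L`; and all such
vectors `l` are `O(L)`-equivalent. -/
theorem orthogonal_complement_of_minus_four_vector
    (l : Fin 10 → ℤ) (hl : inn LGram l l = -4)
    (hhalf : ∀ y : Fin 10 → ℤ, 2 ∣ inn LGram l y) :
    -- `L' = l^⊥ ∩ L` is isometric to `U² ⊕ D₅` …
    (∃ e : ↥(perp l) ≃ₗ[ℤ] (Fin 9 → ℤ),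
      ∀ x y : ↥(perp l), inn MGram (e x) (e y) = inn LGram x y) ∧
    -- … every isometry of `L'` extends to an isometry of `L` …
    (∀ f : ↥(perp l) ≃ₗ[ℤ] ↥(perp l),
      (∀ x y : ↥(perp l),
        inn LGram ((f x : Fin 10 → ℤ)) ((f y : Fin 10 → ℤ)) = inn LGram x y) →
      ∃ F : (Fin 10 → ℤ) ≃ₗ[ℤ] (Fin 10 → ℤ),
        (∀ x y : Fin 10 → ℤ, inn LGram (F x) (F y) = inn LGram x y) ∧
        ∀ x : ↥(perp l), F (x : Fin 10 → ℤ) = (f x : Fin 10 → ℤ)) ∧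
    -- … and all such vectors `l` are `O(L)`-equivalent
    (∀ l' : Fin 10 → ℤ, inn LGram l' l' = -4 →
      (∀ y : Fin 10 → ℤ, 2 ∣ inn LGram l' y) →
      ∃ F : (Fin 10 → ℤ) ≃ₗ[ℤ] (Fin 10 → ℤ),
        (∀ x y : Fin 10 → ℤ, inn LGram (F x) (F y) = inn LGram x y) ∧
        F l = l') := by
  simp only [inn_eq_toBilin'] at *
  have h : IsReflectiveMinusFourVector formL l := ⟨hl, hhalf⟩
  refine ⟨?_, fun f hf => ?_, fun l' hl' hhalf' => ?_⟩
  · obtain ⟨e⟩ := nonempty_isometryEquiv_perp h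
    exact ⟨e.toLinearEquiv, fun x y => e.map_app y x⟩
  · obtain ⟨F, hF⟩ := exists_isometryEquiv_extending h ⟨f, hf⟩
    exact ⟨F.toLinearEquiv, fun x y => F.map_app y x, hF⟩
  · obtain ⟨g, hg⟩ := isOrbitEquiv_of_isReflectiveMinusFourVector h ⟨hl', hhalf'⟩
    exact ⟨g.toLinearEquiv, fun x y => g.map_app y x, hg⟩
end
end

section
/- Let L be an odd lattice of signature (2,n), let L₀ be its even part (the kernel of the homomorphism L → ℤ/2ℤ, l ↦ (l,l) mod 2), and let x ∈ D_{L₀} be the order-2 element of the discriminant group of L₀ with L = ⟨L₀, x⟩ inside L₀^∨. Let Γ ⊂ O(L₀) be the stabilizer of x for the action of O(L₀) on D_{L₀}. Then O(L) = Γ as subgroups of O(L ⊗ ℚ) = O(L₀ ⊗ ℚ), and consequently the modular varieties F_{L₀}(Γ) and F_L(O(L)) are naturally isomorphic. -/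
/-!
# Odd lattices, even parts, and modular varieties (Ma, Proposition A.2,
after Dolgachev–Kondō)

Let `L` be an odd lattice of signature `(2, n)`, let `L₀` be its even part
(the kernel of `l ↦ (l,l) mod 2`), and let `x ∈ D_{L₀}` be the order-2
element of the discriminant group of `L₀` with `L = ⟨L₀, x⟩` inside `L₀^∨`.
Let `Γ ⊆ O(L₀)` be the stabilizer of `x` for the action of `O(L₀)` on
`D_{L₀}`.  Then `O(L) = Γ` as subgroups of `O(L ⊗ ℚ) = O(L₀ ⊗ ℚ)`, and
consequently the modular varieties `F_{L₀}(Γ)` and `F_L(O(L))` are naturally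
isomorphic.

Modelling conventions:

* The lattice `L` is `ℤ^m` (`m = n + 2`) with a symmetric nondegenerate Gram
  matrix `G`, odd (some vector has odd norm), of signature `(2, n)` (the real
  form is congruent to `diag(1, 1, −1, …, −1)`).
* Inside `L ⊗ ℚ = ℚ^m` : `Lset` is the set of integral vectors and `L0set`
  the set of integral vectors of even norm (the even part `L₀`).  The common
  rational orthogonal group `O(L ⊗ ℚ) = O(L₀ ⊗ ℚ)` consists of the invertible
  rational matrices preserving the form; `O(L)` is the subgroup preserving
  `Lset`, and `Γ` is the subgroup preserving `L0set` and fixing the class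
  `x = [w] ∈ D_{L₀} = L₀^∨/L₀`, where `w` is any vector of `L ∖ L₀`
  (`P` fixes `x` iff `P·w − w ∈ L₀`).  The first claim: these two subgroups
  coincide.
* The period domain `Ω_L = Ω_{L₀} ⊆ ℙ(L ⊗ ℂ)` is modelled by its affine cone
  `{v : (v,v) = 0, (v, v̄) > 0}`; the modular variety `F_L(Γ')` is the
  quotient of `Ω_L` by scalars and by `Γ'`; the second claim: the identity of
  `Ω` induces an isomorphism (a bijection) `F_{L₀}(Γ) ≃ F_L(O(L))`.
-/

noncomputable section

open Matrix

variable {m : ℕ}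

/-- The `ℤ`-bilinear form of the Gram matrix `G`. -/
def innZ (G : Matrix (Fin m) (Fin m) ℤ) (x y : Fin m → ℤ) : ℤ := x ⬝ᵥ G.mulVec y

/-- The `ℚ`-bilinear extension of the form to `L ⊗ ℚ = ℚ^m`. -/
def innQ (G : Matrix (Fin m) (Fin m) ℤ) (x y : Fin m → ℚ) : ℚ :=
  x ⬝ᵥ (G.map (Int.cast : ℤ → ℚ)).mulVec y

/-- The `ℂ`-bilinear extension of the form to `L ⊗ ℂ = ℂ^m`. -/
def innC (G : Matrix (Fin m) (Fin m) ℤ) (x y : Fin m → ℂ) : ℂ :=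
  x ⬝ᵥ (G.map (Int.cast : ℤ → ℂ)).mulVec y

/-- The lattice `L = ℤ^m` inside `L ⊗ ℚ = ℚ^m`. -/
def Lset (m : ℕ) : Set (Fin m → ℚ) := {v | ∀ i, ∃ k : ℤ, v i = (k : ℚ)}

/-- The even part `L₀ = {l ∈ L : (l,l) ∈ 2ℤ}` of the (odd) lattice `L`,
inside `L ⊗ ℚ`. -/
def L0set (G : Matrix (Fin m) (Fin m) ℤ) : Set (Fin m → ℚ) :=
  {v | v ∈ Lset m ∧ ∃ k : ℤ, innQ G v v = 2 * (k : ℚ)}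

/-- Membership in the rational orthogonal group `O(L ⊗ ℚ) = O(L₀ ⊗ ℚ)`. -/
def IsRatIsometry (G : Matrix (Fin m) (Fin m) ℤ) (P : Matrix (Fin m) (Fin m) ℚ) : Prop :=
  IsUnit P.det ∧ Pᵀ * G.map (Int.cast : ℤ → ℚ) * P = G.map (Int.cast : ℤ → ℚ)

/-- The subgroup `O(L) ⊆ O(L ⊗ ℚ)`: rational isometries preserving `L`. -/
def OLat (G : Matrix (Fin m) (Fin m) ℤ) : Set (Matrix (Fin m) (Fin m) ℚ) :=
  {P | IsRatIsometry G P ∧ P.mulVec '' Lset m = Lset m}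

/-- The subgroup `Γ ⊆ O(L₀)`: rational isometries preserving `L₀` and fixing
the class `x = [w] ∈ D_{L₀} = L₀^∨/L₀` (that is, `P·w − w ∈ L₀`). -/
def GammaLat (G : Matrix (Fin m) (Fin m) ℤ) (w : Fin m → ℚ) :
    Set (Matrix (Fin m) (Fin m) ℚ) :=
  {P | IsRatIsometry G P ∧ P.mulVec '' L0set G = L0set G ∧ P.mulVec w - w ∈ L0set G}

/-- The affine cone over the period domain
`Ω_L = {ℂv ∈ ℙ(L ⊗ ℂ) : (v,v) = 0, (v,v̄) > 0}` (`= Ω_{L₀}`). -/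
def OmegaCone (G : Matrix (Fin m) (Fin m) ℤ) : Set (Fin m → ℂ) :=
  {v | innC G v v = 0 ∧ 0 < (innC G v (star v)).re}

/-- The equivalence on `Ω_L` defining the modular variety `F_L(Γ')` for a set
`Γ'` of rational isometries: two period points are identified iff they differ
by a scalar or by an element of `Γ'`. -/
def modRel (G : Matrix (Fin m) (Fin m) ℤ) (Γ' : Set (Matrix (Fin m) (Fin m) ℚ))
    (v w : ↥(OmegaCone G)) : Prop :=
  (∃ c : ℂ, c ≠ 0 ∧ (w : Fin m → ℂ) = c • (v : Fin m → ℂ)) ∨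
  (∃ P ∈ Γ', (w : Fin m → ℂ) = (P.map (Rat.cast : ℚ → ℂ)).mulVec (v : Fin m → ℂ))

/-!
The norm `(l, l)` is additive modulo 2 on `L`, because
`(u + v, u + v) = (u, u) + (v, v) + 2 (u, v)`. Hence `L₀` has index 2 in `L`, and `L = L₀ + ℤ w`.
An isometry preserving `L` preserves the parity of norms, so it preserves `L₀` and its only
nontrivial coset `w + L₀` in `L`; an isometry preserving `L₀` and the coset `w + L₀` preserves the
group that they generate, which is `L`. The two modular varieties are then quotients of the same
period domain by the same group.
-/

section IndexTwo

variable {A : Type*} [AddCommGroup A] {L L₀ : AddSubgroup A} {w : A}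

theorem sub_mem_of_relIndex_eq_two (hindex : L₀.relIndex L = 2) {u v : A} (hu : u ∈ L)
    (hv : v ∈ L) (hu₀ : u ∉ L₀) (hv₀ : v ∉ L₀) : u - v ∈ L₀ := by
  have hadd := AddSubgroup.add_mem_iff_of_index_two (H := L₀.addSubgroupOf L) hindex
    (a := ⟨u, hu⟩) (b := -⟨v, hv⟩)
  rw [neg_mem_iff, ← sub_eq_add_neg] at hadd
  exact hadd.2 (iff_of_false hu₀ hv₀)

theorem sup_zmultiples_eq_of_relIndex_eq_two (hle : L₀ ≤ L) (hindex : L₀.relIndex L = 2)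
    (hw : w ∈ L) (hw₀ : w ∉ L₀) : L₀ ⊔ AddSubgroup.zmultiples w = L := by
  refine le_antisymm (sup_le hle (AddSubgroup.zmultiples_le_of_mem hw)) fun u hu => ?_
  by_cases hu₀ : u ∈ L₀
  · exact AddSubgroup.mem_sup_left hu₀
  · rw [← sub_add_cancel u w]
    exact AddSubgroup.add_mem_sup (sub_mem_of_relIndex_eq_two hindex hu hw hu₀ hw₀)
      (AddSubgroup.mem_zmultiples w)

theorem zmultiples_le_sup_zmultiples_of_sub_mem {H : AddSubgroup A} {u v : A} (h : u - v ∈ H) :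
    AddSubgroup.zmultiples u ≤ H ⊔ AddSubgroup.zmultiples v := by
  refine AddSubgroup.zmultiples_le_of_mem ?_
  rw [← sub_add_cancel u v]
  exact AddSubgroup.add_mem_sup h (AddSubgroup.mem_zmultiples v)

theorem sup_zmultiples_eq_of_sub_mem {H : AddSubgroup A} {u v : A} (h : u - v ∈ H) :
    H ⊔ AddSubgroup.zmultiples u = H ⊔ AddSubgroup.zmultiples v :=
  le_antisymm (sup_le le_sup_left (zmultiples_le_sup_zmultiples_of_sub_mem h))
    (sup_le le_sup_left (zmultiples_le_sup_zmultiples_of_sub_mem (sub_mem_comm_iff.1 h)))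

theorem map_sup_zmultiples_eq_self {H : AddSubgroup A} {f : A →+ A} (hmap : H.map f = H)
    (hfw : f w - w ∈ H) :
    (H ⊔ AddSubgroup.zmultiples w).map f = H ⊔ AddSubgroup.zmultiples w := by
  rw [AddSubgroup.map_sup, hmap, AddMonoidHom.map_zmultiples, sup_zmultiples_eq_of_sub_mem hfw]

theorem map_eq_self_of_mem_iff {f : A →+ A} (hle : L₀ ≤ L) (hmap : L.map f = L)
    (hmem : ∀ u ∈ L, f u ∈ L → (f u ∈ L₀ ↔ u ∈ L₀)) : L₀.map f = L₀ := by
  have hf : ∀ u ∈ L, f u ∈ L := fun u hu => hmap.le (AddSubgroup.mem_map_of_mem f hu)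
  refine le_antisymm ?_ fun v hv => ?_
  · rintro _ ⟨u, hu, rfl⟩
    exact (hmem u (hle hu) (hf u (hle hu))).2 hu
  · obtain ⟨u, hu, rfl⟩ := hmap.ge (hle hv)
    exact ⟨u, (hmem u hu (hle hv)).1 hv, rfl⟩

theorem map_eq_self_iff_of_relIndex_eq_two {f : A →+ A} (hle : L₀ ≤ L)
    (hindex : L₀.relIndex L = 2) (hw : w ∈ L) (hw₀ : w ∉ L₀)
    (hmem : ∀ u ∈ L, f u ∈ L → (f u ∈ L₀ ↔ u ∈ L₀)) :
    L.map f = L ↔ L₀.map f = L₀ ∧ f w - w ∈ L₀ := by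
  constructor
  · intro hmap
    have hfw : f w ∈ L := hmap.le (AddSubgroup.mem_map_of_mem f hw)
    exact ⟨map_eq_self_of_mem_iff hle hmap hmem,
      sub_mem_of_relIndex_eq_two hindex hfw hw (mt (hmem w hw hfw).1 hw₀) hw₀⟩
  · rintro ⟨hmap, hfw⟩
    rw [← sup_zmultiples_eq_of_relIndex_eq_two hle hindex hw hw₀]
    exact map_sup_zmultiples_eq_self hmap hfw

end IndexTwo

section EvenPart

variable {G : Matrix (Fin m) (Fin m) ℤ}

theorem innZ_comm (hG : G.IsSymm) (a b : Fin m → ℤ) : innZ G a b = innZ G b a := by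
  rw [innZ, dotProduct_mulVec, ← mulVec_transpose, hG.eq, dotProduct_comm, innZ]

theorem innZ_add_self (hG : G.IsSymm) (a b : Fin m → ℤ) :
    innZ G (a + b) (a + b) = innZ G a a + innZ G b b + 2 * innZ G a b := by
  have hcomm := innZ_comm hG a b
  simp only [innZ, mulVec_add, add_dotProduct, dotProduct_add] at hcomm ⊢
  linarith

theorem innQ_intCast (a b : Fin m → ℤ) :
    innQ G (Int.cast ∘ a) (Int.cast ∘ b) = innZ G a b := by
  simp only [innQ, innZ, dotProduct, mulVec, map_apply, Function.comp_apply, Int.cast_sum,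
    Int.cast_mul]

theorem mem_Lset_iff {v : Fin m → ℚ} : v ∈ Lset m ↔ ∃ a : Fin m → ℤ, v = Int.cast ∘ a := by
  simp only [Lset, Set.mem_ofPred_eq, Classical.skolem, funext_iff, Function.comp_apply]

theorem intCast_mem_L0set_iff {a : Fin m → ℤ} :
    (Int.cast ∘ a : Fin m → ℚ) ∈ L0set G ↔ Even (innZ G a a) := by
  have hL : (Int.cast ∘ a : Fin m → ℚ) ∈ Lset m := mem_Lset_iff.2 ⟨a, rfl⟩
  simp only [L0set, Set.mem_ofPred_eq, hL, true_and, innQ_intCast, even_iff_exists_two_mul]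
  norm_cast

theorem add_mem_L0set_iff (hG : G.IsSymm) {u v : Fin m → ℚ} (hu : u ∈ Lset m)
    (hv : v ∈ Lset m) : u + v ∈ L0set G ↔ (u ∈ L0set G ↔ v ∈ L0set G) := by
  obtain ⟨a, rfl⟩ := mem_Lset_iff.1 hu
  obtain ⟨b, rfl⟩ := mem_Lset_iff.1 hv
  have hcast : (Int.cast ∘ a + Int.cast ∘ b : Fin m → ℚ) = Int.cast ∘ (a + b) := by
    ext i
    simp only [Pi.add_apply, Function.comp_apply, Int.cast_add]
  simp only [hcast, intCast_mem_L0set_iff, innZ_add_self hG, Int.even_add, even_two_mul, iff_true]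

variable (m) in
/-- The lattice `L = ℤ^m`, as a subgroup of `L ⊗ ℚ`; its underlying set is `Lset m`. -/
def integralLattice : AddSubgroup (Fin m → ℚ) where
  carrier := Lset m
  zero_mem' _ := ⟨0, Int.cast_zero.symm⟩
  add_mem' hu hv i := by
    obtain ⟨⟨a, ha⟩, ⟨b, hb⟩⟩ := And.intro (hu i) (hv i)
    exact ⟨a + b, by rw [Pi.add_apply, ha, hb, Int.cast_add]⟩
  neg_mem' hu i := by
    obtain ⟨a, ha⟩ := hu i
    exact ⟨-a, by rw [Pi.neg_apply, ha, Int.cast_neg]⟩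

/-- The even part `L₀` of `L`, as a subgroup of `L ⊗ ℚ`; its underlying set is `L0set G`. -/
def evenPart (hG : G.IsSymm) : AddSubgroup (Fin m → ℚ) where
  carrier := L0set G
  zero_mem' := ⟨(integralLattice m).zero_mem, 0, by simp [innQ]⟩
  add_mem' hu hv := (add_mem_L0set_iff hG hu.1 hv.1).2 (iff_of_true hu hv)
  neg_mem' hu := ⟨(integralLattice m).neg_mem hu.1, by simpa [innQ, mulVec_neg] using hu.2⟩

theorem evenPart_le_integralLattice (hG : G.IsSymm) : evenPart hG ≤ integralLattice m :=
  fun _ hu => hu.1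

theorem relIndex_evenPart_integralLattice (hG : G.IsSymm) {w : Fin m → ℚ} (hw : w ∈ Lset m)
    (hw₀ : w ∉ L0set G) : (evenPart hG).relIndex (integralLattice m) = 2 := by
  refine AddSubgroup.relIndex_eq_two_iff_exists_notMem_and.2 ⟨w, hw, hw₀, fun u hu => ?_⟩
  exact or_iff_not_imp_right.2 fun hu₀ => (add_mem_L0set_iff hG hu hw).2 (iff_of_false hu₀ hw₀)

end EvenPart

section Isometry

variable {G : Matrix (Fin m) (Fin m) ℤ} {P : Matrix (Fin m) (Fin m) ℚ}

theorem IsRatIsometry.innQ_mulVec (hP : IsRatIsometry G P) (u v : Fin m → ℚ) :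
    innQ G (P *ᵥ u) (P *ᵥ v) = innQ G u v := by
  conv_rhs => rw [innQ, ← hP.2]
  rw [innQ, ← mulVec_mulVec, ← mulVec_mulVec, dotProduct_mulVec u, vecMul_transpose]

theorem IsRatIsometry.mulVec_mem_L0set_iff (hP : IsRatIsometry G P) {u : Fin m → ℚ}
    (hu : u ∈ Lset m) (hPu : P *ᵥ u ∈ Lset m) : P *ᵥ u ∈ L0set G ↔ u ∈ L0set G := by
  simp only [L0set, Set.mem_ofPred_eq, hu, hPu, hP.innQ_mulVec]

theorem IsRatIsometry.image_Lset_eq_iff (hP : IsRatIsometry G P) (hG : G.IsSymm)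
    {w : Fin m → ℚ} (hw : w ∈ Lset m) (hw₀ : w ∉ L0set G) :
    P.mulVec '' Lset m = Lset m ↔
      P.mulVec '' L0set G = L0set G ∧ P *ᵥ w - w ∈ L0set G := by
  have hmap_iff := map_eq_self_iff_of_relIndex_eq_two (f := P.mulVecLin.toAddMonoidHom)
    (evenPart_le_integralLattice hG) (relIndex_evenPart_integralLattice hG hw hw₀) hw hw₀
    fun _ hu hPu => hP.mulVec_mem_L0set_iff hu hPu
  exact SetLike.coe_set_eq.trans (hmap_iff.trans (and_congr_left' SetLike.coe_set_eq.symm))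

theorem OLat_eq_GammaLat (hG : G.IsSymm) {w : Fin m → ℚ} (hw : w ∈ Lset m)
    (hw₀ : w ∉ L0set G) : OLat G = GammaLat G w :=
  Set.ext fun _ => and_congr_right fun hP => hP.image_Lset_eq_iff hG hw hw₀

end Isometry

theorem even_part_stabilizer_and_modular_varieties_general
    {G : Matrix (Fin m) (Fin m) ℤ} (hG : G.IsSymm) {w : Fin m → ℚ} (hw : w ∈ Lset m)
    (hw₀ : w ∉ L0set G) :
    OLat G = GammaLat G w ∧
    ∃ e : Quot (modRel G (GammaLat G w)) ≃ Quot (modRel G (OLat G)),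
      ∀ v : OmegaCone G, e (Quot.mk _ v) = Quot.mk _ v := by
  have h := OLat_eq_GammaLat hG hw hw₀
  exact ⟨h, Quot.congrRight fun _ _ => by rw [h], fun _ => rfl⟩

/-- **Ma, Proposition A.2.**  Let `L = (ℤ^{n+2}, G)` be an odd nondegenerate
lattice of signature `(2, n)`, `L₀` its even part, and `x = [w]` the order-2
element of `D_{L₀}` giving the extension `L₀ ⊆ L` (`w ∈ L ∖ L₀`).  Then
`O(L)` equals the stabilizer `Γ ⊆ O(L₀)` of `x`, as subgroups of
`O(L₀ ⊗ ℚ)`, and consequently the modular varieties `F_{L₀}(Γ)` and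
`F_L(O(L))` are naturally isomorphic. -/
theorem even_part_stabilizer_and_modular_varieties
    (n : ℕ) (G : Matrix (Fin (n + 2)) (Fin (n + 2)) ℤ)
    (hsymm : G.IsSymm) (hnondeg : G.det ≠ 0)
    -- `L` is odd …
    (hodd : ∃ v : Fin (n + 2) → ℤ, Odd (innZ G v v))
    -- … of signature `(2, n)`
    (hsig : ∃ P : Matrix (Fin (n + 2)) (Fin (n + 2)) ℝ, IsUnit P.det ∧
      Pᵀ * G.map (Int.cast : ℤ → ℝ) * P =
        Matrix.diagonal (fun i : Fin (n + 2) => if (i : ℕ) < 2 then (1 : ℝ) else -1))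
    -- `w` represents the order-2 element `x ∈ D_{L₀}` with `L = ⟨L₀, x⟩`:
    -- any element of `L ∖ L₀`
    (w : Fin (n + 2) → ℚ) (hwL : w ∈ Lset (n + 2)) (hwodd : w ∉ L0set G) :
    OLat G = GammaLat G w ∧
    Nonempty (Quot (modRel G (GammaLat G w)) ≃ Quot (modRel G (OLat G))) := by
  exact (even_part_stabilizer_and_modular_varieties_general hsymm hwL hwodd).imp_right
    fun ⟨e, _⟩ => ⟨e⟩
end
end
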